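/- Let p ∈ (0, √15/5], set c₀(p) = (π/2)⁻⁴·(2/π − ((1/(3p²))·cos(pπ/2) + 1 − 1/(3p²))) and c₁(p) = (3 − 5p²)/360, and define Si(t) = ∫₀ᵗ (sin x)/x dx. Then for every t ∈ (0, π/2), sin(pt)/(3p³) + (1 − 1/(3p²))·t + (c₀(p)/5)·t⁵ < Si(t) < sin(pt)/(3p³) + (1 − 1/(3p²))·t + (c₁(p)/5)·t⁵. -/

import Mathlib

open Real

/-!
Integrate a pointwise bound on `sinc`. The function `φ x = cos (p x) / (3p²) + 1 - 1 / (3p²)` agrees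
with `sinc` to third order at `0`; put `q x = (sinc x - φ x) / x⁴`. Then `q` tends to
`c₁ = (3 - 5p²) / 360` at `0`, and `c₀ = q (π / 2)`. So the bounds
`φ x + c₀ x⁴ < sinc x < φ x + c₁ x⁴` express that `q` decreases from its limit at `0` to its value
at `π / 2`. Both `q x < c₁` and the negativity of `deriv q` follow from the alternating Taylor
bounds for `cos` and `sinc`: for `p² ≤ 3 / 5` the leading coefficient `1 / 5040 - p⁴ / 2160` is at
least `1 / 31500`, which is enough to absorb the remaining terms.
-/

/-- The Taylor polynomial of `cos` at `0` of degree `2 * n`. -/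
noncomputable def cosTaylor (n : ℕ) (x : ℝ) : ℝ :=
  ∑ k ∈ Finset.range (n + 1), (-1) ^ k * x ^ (2 * k) / (2 * k).factorial

/-- The Taylor polynomial of `sinc` at `0` of degree `2 * n`; the one of `sin` of degree `2 * n + 1`
is `x * sincTaylor n x`. Working with `sinc` instead of `sin` makes all bounds even in `x`. -/
noncomputable def sincTaylor (n : ℕ) (x : ℝ) : ℝ :=
  ∑ k ∈ Finset.range (n + 1), (-1) ^ k * x ^ (2 * k) / (2 * k + 1).factorial

lemma cosTaylor_abs (n : ℕ) (x : ℝ) : cosTaylor n |x| = cosTaylor n x := by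
  simp only [cosTaylor, (even_two_mul _).pow_abs]

lemma sincTaylor_abs (n : ℕ) (x : ℝ) : sincTaylor n |x| = sincTaylor n x := by
  simp only [sincTaylor, (even_two_mul _).pow_abs]

lemma hasDerivAt_mul_sincTaylor (n : ℕ) (x : ℝ) :
    HasDerivAt (fun y ↦ y * sincTaylor n y) (cosTaylor n x) x := by
  simp only [sincTaylor, cosTaylor, Finset.mul_sum]
  refine HasDerivAt.fun_sum fun k _ ↦ ?_
  have hterm := ((hasDerivAt_pow (2 * k + 1) x).const_mul ((-1 : ℝ) ^ k)).div_const
    ((2 * k + 1).factorial : ℝ)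
  refine (hterm.congr_deriv ?_).congr_of_eventuallyEq (.of_forall fun y ↦ by ring)
  rw [Nat.factorial_succ, Nat.add_sub_cancel]
  push_cast
  field_simp

lemma hasDerivAt_cosTaylor_succ (n : ℕ) (x : ℝ) :
    HasDerivAt (cosTaylor (n + 1)) (-(x * sincTaylor n x)) x := by
  have hsplit : cosTaylor (n + 1) = fun y ↦ (∑ k ∈ Finset.range (n + 1),
      (-1) ^ (k + 1) * y ^ (2 * k + 2) / ((2 * k + 2).factorial : ℝ)) + 1 := by
    funext y
    simp [cosTaylor, Finset.sum_range_succ' _ (n + 1), mul_add]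
  rw [hsplit]
  simp only [sincTaylor, Finset.mul_sum, ← Finset.sum_neg_distrib]
  refine (HasDerivAt.fun_sum fun k _ ↦ ?_).add_const 1
  have hterm := ((hasDerivAt_pow (2 * k + 2) x).const_mul ((-1 : ℝ) ^ (k + 1))).div_const
    ((2 * k + 2).factorial : ℝ)
  refine hterm.congr_deriv ?_
  rw [Nat.factorial_succ, show 2 * k + 2 - 1 = 2 * k + 1 by lia]
  push_cast
  field_simp
  ring

lemma nonneg_of_hasDerivAt_nonneg {f f' : ℝ → ℝ} {a x : ℝ}
    (hf : ∀ y, a ≤ y → HasDerivAt f (f' y) y)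
    (hfa : f a = 0) (hf' : ∀ y, a ≤ y → 0 ≤ f' y) (hx : a ≤ x) : 0 ≤ f x := by
  have hmono : MonotoneOn f (Set.Ici a) := by
    refine monotoneOn_of_deriv_nonneg (convex_Ici a)
      (fun y hy ↦ (hf y hy).continuousAt.continuousWithinAt)
      (fun y hy ↦ (hf y (interior_subset hy)).differentiableAt.differentiableWithinAt)
      fun y hy ↦ ?_
    rw [(hf y (interior_subset hy)).deriv]
    exact hf' y (interior_subset hy)
  exact hfa ▸ hmono Set.self_mem_Ici hx hx

lemma neg_one_pow_mul_mul_sincTaylor_sub_sin_nonneg_of_cos {n : ℕ}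
    (hcos : ∀ y : ℝ, 0 ≤ y → 0 ≤ (-1) ^ n * (cosTaylor n y - cos y)) {x : ℝ} (hx : 0 ≤ x) :
    0 ≤ (-1) ^ n * (x * sincTaylor n x - sin x) :=
  nonneg_of_hasDerivAt_nonneg (f := fun y ↦ (-1) ^ n * (y * sincTaylor n y - sin y))
    (fun y _ ↦ ((hasDerivAt_mul_sincTaylor n y).sub (hasDerivAt_sin y)).const_mul _)
    (by simp) hcos hx

lemma neg_one_pow_mul_cosTaylor_sub_cos_nonneg (n : ℕ) :
    ∀ x : ℝ, 0 ≤ x → 0 ≤ (-1) ^ n * (cosTaylor n x - cos x) := by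
  induction n with
  | zero => simp [cosTaylor, cos_le_one]
  | succ n ih =>
    refine fun x hx ↦ nonneg_of_hasDerivAt_nonneg
      (f := fun y ↦ (-1) ^ (n + 1) * (cosTaylor (n + 1) y - cos y))
      (f' := fun y ↦ (-1) ^ n * (y * sincTaylor n y - sin y)) (fun y _ ↦ ?_) ?_
      (fun y hy ↦ neg_one_pow_mul_mul_sincTaylor_sub_sin_nonneg_of_cos ih hy) hx
    · exact (((hasDerivAt_cosTaylor_succ n y).sub (hasDerivAt_cos y)).const_mul _).congr_deriv
        (by ring)
    · simp [cosTaylor, Finset.sum_range_succ' _ (n + 1)]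

lemma neg_one_pow_mul_sincTaylor_sub_sinc_nonneg (n : ℕ) {x : ℝ} (hx : 0 ≤ x) :
    0 ≤ (-1) ^ n * (sincTaylor n x - sinc x) := by
  rcases hx.eq_or_lt with rfl | hx
  · simp [sincTaylor, Finset.sum_range_succ']
  · have hsin := neg_one_pow_mul_mul_sincTaylor_sub_sin_nonneg_of_cos
      (neg_one_pow_mul_cosTaylor_sub_cos_nonneg n) hx.le
    refine (div_nonneg hsin hx.le).trans_eq ?_
    rw [sinc_of_ne_zero hx.ne']
    field_simp

lemma sinc_abs (x : ℝ) : sinc |x| = sinc x := by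
  rcases abs_choice x with h | h <;> simp [h]

section TaylorBounds

variable {n : ℕ} (x : ℝ)

lemma cos_le_cosTaylor (hn : Even n) : cos x ≤ cosTaylor n x := by
  simpa [hn.neg_one_pow, cosTaylor_abs] using
    neg_one_pow_mul_cosTaylor_sub_cos_nonneg n |x| (abs_nonneg x)

lemma cosTaylor_le_cos (hn : Odd n) : cosTaylor n x ≤ cos x := by
  simpa [hn.neg_one_pow, cosTaylor_abs] using
    neg_one_pow_mul_cosTaylor_sub_cos_nonneg n |x| (abs_nonneg x)

lemma sinc_le_sincTaylor (hn : Even n) : sinc x ≤ sincTaylor n x := by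
  simpa [hn.neg_one_pow, sincTaylor_abs, sinc_abs] using
    neg_one_pow_mul_sincTaylor_sub_sinc_nonneg n (abs_nonneg x)

lemma sincTaylor_le_sinc (hn : Odd n) : sincTaylor n x ≤ sinc x := by
  simpa [hn.neg_one_pow, sincTaylor_abs, sinc_abs] using
    neg_one_pow_mul_sincTaylor_sub_sinc_nonneg n (abs_nonneg x)

end TaylorBounds

/-- The combination of `cos (p * x)` and `1` that agrees with `sinc x` to third order at `x = 0`.
Meaningful only for `p ≠ 0`. -/
noncomputable def cosApprox (p x : ℝ) : ℝ :=
  cos (p * x) / (3 * p ^ 2) + (1 - 1 / (3 * p ^ 2))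

/-- The coefficient `c` for which `sinc x = cosApprox p x + c * x ^ 4`. Meaningful only for
`x ≠ 0`. -/
noncomputable def quarticCoeff (p x : ℝ) : ℝ :=
  (sinc x - cosApprox p x) / x ^ 4

@[fun_prop]
lemma continuous_cosApprox (p : ℝ) : Continuous (cosApprox p) := by
  unfold cosApprox
  fun_prop

lemma hasDerivAt_sinc {x : ℝ} (hx : x ≠ 0) : HasDerivAt sinc ((cos x - sinc x) / x) x := by
  have hdiv := (hasDerivAt_sin x).fun_div (hasDerivAt_id' x) hx
  refine (hdiv.congr_deriv ?_).congr_of_eventuallyEq ?_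
  · rw [sinc_of_ne_zero hx]
    field_simp
  · filter_upwards [isOpen_ne.mem_nhds hx] with y hy using sinc_of_ne_zero hy

section

variable {p : ℝ} (hp : p ≠ 0)
include hp

lemma hasDerivAt_cosApprox (x : ℝ) :
    HasDerivAt (cosApprox p) (-(x * sinc (p * x) / 3)) x := by
  have hcos : HasDerivAt (fun y ↦ cos (p * y)) (-sin (p * x) * (p * 1)) x :=
    ((hasDerivAt_id' x).const_mul p).cos
  refine ((hcos.div_const (3 * p ^ 2)).add_const (1 - 1 / (3 * p ^ 2))).congr_deriv ?_
  rcases eq_or_ne x 0 with rfl | hx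
  · simp
  · rw [sinc_of_ne_zero (mul_ne_zero hp hx)]
    field_simp

lemma hasDerivAt_quarticCoeff {x : ℝ} (hx : x ≠ 0) :
    HasDerivAt (quarticCoeff p)
      ((cos x - 5 * sinc x + x ^ 2 * sinc (p * x) / 3 + 4 * cosApprox p x) / x ^ 5) x := by
  refine (((hasDerivAt_sinc hx).sub (hasDerivAt_cosApprox hp x)).fun_div
    (hasDerivAt_pow 4 x) (pow_ne_zero 4 hx)).congr_deriv ?_
  simp only [Pi.sub_apply]
  field_simp
  ring

lemma integral_cosApprox_add (c t : ℝ) :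
    ∫ x in (0 : ℝ)..t, (cosApprox p x + c * x ^ 4) =
      sin (p * t) / (3 * p ^ 3) + (1 - 1 / (3 * p ^ 2)) * t + c / 5 * t ^ 5 := by
  have hcos : ∫ x in (0 : ℝ)..t, cos (p * x) = sin (p * t) / p := by
    simp [intervalIntegral.integral_comp_mul_left (fun x ↦ cos x) hp, div_eq_inv_mul]
  have hcosApprox : ∫ x in (0 : ℝ)..t, cosApprox p x =
      sin (p * t) / (3 * p ^ 3) + (1 - 1 / (3 * p ^ 2)) * t := by
    unfold cosApprox
    rw [intervalIntegral.integral_add (Continuous.intervalIntegrable (by fun_prop) _ _)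
      (by simp), intervalIntegral.integral_div, hcos, intervalIntegral.integral_const]
    simp only [sub_zero, smul_eq_mul]
    field_simp
  rw [intervalIntegral.integral_add (Continuous.intervalIntegrable (by fun_prop) _ _)
    (Continuous.intervalIntegrable (by fun_prop) _ _), hcosApprox,
    intervalIntegral.integral_const_mul, integral_pow]
  norm_num
  ring

variable (hp_sq : p ^ 2 ≤ 3 / 5)
include hp_sq

lemma sinc_sub_cosApprox_lt {x : ℝ} (hx : x ≠ 0) (hx_sq : x ^ 2 ≤ 11) :
    sinc x - cosApprox p x < (3 - 5 * p ^ 2) / 360 * x ^ 4 := by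
  have hp_four : p ^ 4 ≤ 9 / 25 := by nlinarith only [hp_sq, sq_nonneg p]
  have hremainder : 0 < x ^ 6 * (1 / 5040 - p ^ 4 / 2160 - x ^ 2 / 362880) :=
    mul_pos (by positivity) (by linarith)
  have hcos : cosTaylor 3 (p * x) / (3 * p ^ 2) ≤ cos (p * x) / (3 * p ^ 2) := by
    gcongr
    exact cosTaylor_le_cos _ (by decide)
  calc sinc x - cosApprox p x
      ≤ sincTaylor 4 x - (cosTaylor 3 (p * x) / (3 * p ^ 2) + (1 - 1 / (3 * p ^ 2))) :=
        sub_le_sub (sinc_le_sincTaylor x (by decide)) (add_le_add_left hcos _)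
    _ = (3 - 5 * p ^ 2) / 360 * x ^ 4
          - x ^ 6 * (1 / 5040 - p ^ 4 / 2160 - x ^ 2 / 362880) := by
        simp only [sincTaylor, cosTaylor, Finset.sum_range_succ, Finset.sum_range_zero,
          Nat.factorial]
        push_cast
        field_simp
        ring
    _ < (3 - 5 * p ^ 2) / 360 * x ^ 4 := sub_lt_self _ hremainder

lemma quarticCoeff_deriv_numerator_neg {x : ℝ} (hx : x ≠ 0) (hx_sq : x ^ 2 ≤ 3) :
    cos x - 5 * sinc x + x ^ 2 * sinc (p * x) / 3 + 4 * cosApprox p x < 0 := by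
  have hp_four : p ^ 4 ≤ 9 / 25 := by nlinarith only [hp_sq, sq_nonneg p]
  have hp_six : p ^ 6 ≤ 27 / 125 := by nlinarith only [hp_sq, hp_four, sq_nonneg p]
  have hx_sq_mul : x ^ 2 * (1 / 90720 + p ^ 6 / 30240) ≤ 3 * (1 / 90720 + 27 / 125 / 30240) := by
    gcongr
  have hx_four : x ^ 4 ≤ 9 := by nlinarith only [hx_sq, sq_nonneg x]
  have hremainder : 0 < x ^ 6 * (1 / 2520 - p ^ 4 / 1080
      - x ^ 2 * (1 / 90720 + p ^ 6 / 30240) - x ^ 4 / 7983360) :=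
    mul_pos (by positivity) (by linarith)
  calc cos x - 5 * sinc x + x ^ 2 * sinc (p * x) / 3 + 4 * cosApprox p x
      ≤ cosTaylor 4 x - 5 * sincTaylor 5 x + x ^ 2 * sincTaylor 2 (p * x) / 3
          + 4 * (cosTaylor 4 (p * x) / (3 * p ^ 2) + (1 - 1 / (3 * p ^ 2))) := by
        unfold cosApprox
        gcongr
        · exact cos_le_cosTaylor _ (by decide)
        · exact sincTaylor_le_sinc _ (by decide)
        · exact sinc_le_sincTaylor _ (by decide)
        · exact cos_le_cosTaylor _ (by decide)
    _ = -(x ^ 6 * (1 / 2520 - p ^ 4 / 1080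
          - x ^ 2 * (1 / 90720 + p ^ 6 / 30240) - x ^ 4 / 7983360)) := by
        simp only [sincTaylor, cosTaylor, Finset.sum_range_succ, Finset.sum_range_zero,
          Nat.factorial]
        push_cast
        field_simp
        ring
    _ < 0 := neg_neg_of_pos hremainder

lemma quarticCoeff_strictAntiOn {r : ℝ} (hr : r ^ 2 ≤ 3) :
    StrictAntiOn (quarticCoeff p) (Set.Ioc 0 r) := by
  refine strictAntiOn_of_deriv_neg (convex_Ioc 0 r)
    (fun x hx ↦ (hasDerivAt_quarticCoeff hp hx.1.ne').continuousAt.continuousWithinAt) fun x hx ↦ ?_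
  obtain ⟨hx_pos, hxr⟩ := interior_subset hx
  rw [(hasDerivAt_quarticCoeff hp hx_pos.ne').deriv]
  have hx_sq : x ^ 2 ≤ 3 := (pow_le_pow_left₀ hx_pos.le hxr 2).trans hr
  exact div_neg_of_neg_of_pos (quarticCoeff_deriv_numerator_neg hp hp_sq hx_pos.ne' hx_sq)
    (by positivity)

lemma cosApprox_add_quarticCoeff_lt_sinc {r x : ℝ} (hr : r ^ 2 ≤ 3) (hx : x ∈ Set.Ioo 0 r) :
    cosApprox p x + quarticCoeff p r * x ^ 4 < sinc x := by
  have hanti : quarticCoeff p r < quarticCoeff p x :=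
    quarticCoeff_strictAntiOn hp hp_sq hr ⟨hx.1, hx.2.le⟩ ⟨hx.1.trans hx.2, le_rfl⟩ hx.2
  exact lt_sub_iff_add_lt'.1 ((lt_div_iff₀ (pow_pos hx.1 4)).1 hanti)

end

lemma integral_lt_integral_of_lt_on_Ioo {f g : ℝ → ℝ} {a b : ℝ} (hab : a < b)
    (hf : IntervalIntegrable f MeasureTheory.volume a b)
    (hg : IntervalIntegrable g MeasureTheory.volume a b) (hlt : ∀ x ∈ Set.Ioo a b, f x < g x) :
    ∫ x in a..b, f x < ∫ x in a..b, g x := by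
  rw [← sub_pos, ← intervalIntegral.integral_sub hg hf]
  exact intervalIntegral.intervalIntegral_pos_of_pos_on (hg.sub hf)
    (fun x hx ↦ sub_pos.2 (hlt x hx)) hab

lemma integral_sin_div (a b : ℝ) : ∫ x in a..b, sin x / x = ∫ x in a..b, sinc x := by
  refine intervalIntegral.integral_congr_ae ?_
  filter_upwards [MeasureTheory.Measure.ae_ne MeasureTheory.volume (0 : ℝ)] with x hx _
  exact (sinc_of_ne_zero hx).symm

lemma quarticCoeff_pi_div_two (p : ℝ) :
    quarticCoeff p (π / 2) = ((π / 2) ^ 4)⁻¹ *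
      (2 / π - (1 / (3 * p ^ 2) * cos (p * π / 2) + 1 - 1 / (3 * p ^ 2))) := by
  rw [quarticCoeff, cosApprox, sinc_of_ne_zero (by positivity), sin_pi_div_two, ← mul_div_assoc p,
    one_div_div]
  ring

theorem stmt_14_general {p r t : ℝ} (hp : p ≠ 0) (hp_sq : p ^ 2 ≤ 3 / 5) (hr : r ^ 2 ≤ 3)
    (ht : t ∈ Set.Ioc 0 r) :
    sin (p * t) / (3 * p ^ 3) + (1 - 1 / (3 * p ^ 2)) * t + quarticCoeff p r / 5 * t ^ 5 <
        ∫ x in (0 : ℝ)..t, sin x / x ∧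
      ∫ x in (0 : ℝ)..t, sin x / x <
        sin (p * t) / (3 * p ^ 3) + (1 - 1 / (3 * p ^ 2)) * t +
          (3 - 5 * p ^ 2) / 360 / 5 * t ^ 5 := by
  rw [integral_sin_div, ← integral_cosApprox_add hp, ← integral_cosApprox_add hp]
  have hsinc : IntervalIntegrable sinc MeasureTheory.volume 0 t :=
    continuous_sinc.intervalIntegrable 0 t
  have happrox (c : ℝ) :
      IntervalIntegrable (fun x ↦ cosApprox p x + c * x ^ 4) MeasureTheory.volume 0 t :=
    Continuous.intervalIntegrable (by fun_prop) 0 t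
  constructor
  · refine integral_lt_integral_of_lt_on_Ioo ht.1 (happrox _) hsinc fun x hx ↦ ?_
    exact cosApprox_add_quarticCoeff_lt_sinc hp hp_sq hr ⟨hx.1, hx.2.trans_le ht.2⟩
  · refine integral_lt_integral_of_lt_on_Ioo ht.1 hsinc (happrox _) fun x hx ↦ ?_
    have hx_sq : x ^ 2 ≤ 3 := (pow_le_pow_left₀ hx.1.le (hx.2.le.trans ht.2) 2).trans hr
    exact sub_lt_iff_lt_add'.1 (sinc_sub_cosApprox_lt hp hp_sq hx.1.ne' (by linarith))

/-- For `p ∈ (0, √15/5]`, with `c₀(p)` and `c₁(p)` as in the paper and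
`Si t = ∫₀ᵗ (sin x)/x dx`, for every `t ∈ (0, π/2)`:
`sin(pt)/(3p³) + (1 − 1/(3p²))t + (c₀(p)/5)t⁵ < Si t
 < sin(pt)/(3p³) + (1 − 1/(3p²))t + (c₁(p)/5)t⁵`. -/
theorem stmt_14 (p : ℝ) (hp : p ∈ Set.Ioc (0 : ℝ) (Real.sqrt 15 / 5))
    (c₀ c₁ : ℝ)
    (hc₀ : c₀ = ((π / 2) ^ 4)⁻¹ *
      (2 / π - (1 / (3 * p ^ 2) * Real.cos (p * π / 2) + 1 - 1 / (3 * p ^ 2))))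
    (hc₁ : c₁ = (3 - 5 * p ^ 2) / 360)
    (t : ℝ) (ht : t ∈ Set.Ioo (0 : ℝ) (π / 2)) :
    Real.sin (p * t) / (3 * p ^ 3) + (1 - 1 / (3 * p ^ 2)) * t + c₀ / 5 * t ^ 5 <
        ∫ x in (0 : ℝ)..t, Real.sin x / x ∧
      (∫ x in (0 : ℝ)..t, Real.sin x / x) <
        Real.sin (p * t) / (3 * p ^ 3) + (1 - 1 / (3 * p ^ 2)) * t + c₁ / 5 * t ^ 5 := by
  have hp_sq : p ^ 2 ≤ 3 / 5 := by
    refine (pow_le_pow_left₀ hp.1.le hp.2 2).trans_eq ?_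
    norm_num [div_pow]
  have hpi_sq : (π / 2) ^ 2 ≤ 3 := by nlinarith only [pi_lt_d2, pi_pos]
  rw [hc₀, hc₁, ← quarticCoeff_pi_div_two]
  exact stmt_14_general hp.1.ne' hp_sq hpi_sq ⟨ht.1, ht.2.le⟩
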